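/- The set 𝒵 of all compact CAT(0) metric spaces is path-connected as a subspace of the Gromov–Hausdorff space, and every nonempty open subset of 𝒵 (in the subspace topology) has infinite covering dimension. -/

import Mathlib

open GromovHausdorff

/-- A topological space has covering dimension at most `n` if every open cover
admits an open refinement that still covers the space and in which every point
lies in at most `n + 1` members of the refinement. -/
def CovDimLE (X : Type*) [TopologicalSpace X] (n : ℕ) : Prop :=
  ∀ U : Set (Set X), (∀ u ∈ U, IsOpen u) → ⋃₀ U = Set.univ →
    ∃ V : Set (Set X), (∀ w ∈ V, IsOpen w) ∧ ⋃₀ V = Set.univ ∧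
      (∀ w ∈ V, ∃ u ∈ U, w ⊆ u) ∧
      ∀ x : X, {w ∈ V | x ∈ w}.encard ≤ (n : ℕ∞) + 1

/-- A metric space is *geodesic* if any two points `x, y` are joined by a
geodesic, i.e. a map `γ : [0,1] → X` with `γ 0 = x`, `γ 1 = y` and
`dist (γ s) (γ t) = |s - t| * dist x y`. -/
def IsGeodesicSpace (X : Type*) [MetricSpace X] : Prop :=
  ∀ x y : X, ∃ γ : ℝ → X, γ 0 = x ∧ γ 1 = y ∧
    ∀ s ∈ Set.Icc (0 : ℝ) 1, ∀ t ∈ Set.Icc (0 : ℝ) 1,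
      dist (γ s) (γ t) = |s - t| * dist x y

/-- A metric space is *CAT(0)* if it is geodesic and every geodesic triangle
satisfies the Euclidean comparison inequality; equivalently (the formulation
used here), the comparison (CN) inequality holds along every geodesic. -/
def IsCAT0Space (X : Type*) [MetricSpace X] : Prop :=
  IsGeodesicSpace X ∧
  ∀ x y z : X, ∀ γ : ℝ → X, γ 0 = x → γ 1 = y →
    (∀ s ∈ Set.Icc (0 : ℝ) 1, ∀ t ∈ Set.Icc (0 : ℝ) 1,
      dist (γ s) (γ t) = |s - t| * dist x y) →
    ∀ t ∈ Set.Icc (0 : ℝ) 1,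
      dist z (γ t) ^ 2 ≤
        (1 - t) * dist z x ^ 2 + t * dist z y ^ 2 - t * (1 - t) * dist x y ^ 2

/-- The subset `𝒵` of the Gromov–Hausdorff space consisting of (isometry
classes of) compact CAT(0) metric spaces. -/
def GHCat0 : Set GHSpace := {p | IsCAT0Space p.Rep}

/-!
A Kuratowski embedding of a compact CAT(0) space into `ℓ^∞`, scaled by `c ∈ [0, 1]`, has CAT(0)
range and depends continuously on `c`, so `𝒵` contracts onto the one-point space.

For the dimension, multiply a compact CAT(0) space `X` by polydiscs `∏ i, B(R i)`, where `B(R i)` is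
the ball of radius `R i ≤ r i` in `ℝ^(d i)`. The result is a CAT(0) space close to `X` that varies
continuously with `R`. The radii `r i` decrease rapidly and the dimensions `d i` are chosen
recursively so large that `d k` points of the product of `X` and the earlier balls cannot be far
apart, while the later balls are too small to matter. An orthonormal basis of `ℝ^(d k)` then tells
`R k = r k` from `R k = 0`, so opposite faces of the cube `∏ i, [0, r i]` have disjoint images in
`𝒵`, and Lebesgue's covering theorem bounds the covering dimension from below.

Lebesgue's theorem is proved with calculus. A smooth partition of unity subordinate to a cover by
sets that meet no two opposite faces defines a smooth map `g` of the cube that preserves its faces.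
Where at most `n` of the functions are nonzero, the determinant of `Dg` vanishes. It cannot vanish
on the whole cube: with `h = g - id`, the integral of `det (1 + t Dh)` is a polynomial in `t` which,
by change of variables, equals the volume of the cube for small `t > 0`, hence also for `t = 1`.
-/

open MeasureTheory Set Metric
open scoped unitInterval NNReal

theorem sum_eval_lagrangeBasis_mul_det_one_add_smul {𝕜 V : Type*} [Field 𝕜] [DecidableEq 𝕜]
    [AddCommGroup V] [Module 𝕜 V] [FiniteDimensional 𝕜 V] (M : V →ₗ[𝕜] V) {s : Finset 𝕜}
    (hs : Module.finrank 𝕜 V < s.card) (c : 𝕜) :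
    ∑ t ∈ s, (Lagrange.basis s id t).eval c * (1 + t • M).det = (1 + c • M).det := by
  let b := Module.finBasis 𝕜 V
  let A := LinearMap.toMatrix b b M
  let p : Polynomial 𝕜 :=
    ((Polynomial.X : Polynomial 𝕜) • A.map Polynomial.C + (1 : Matrix _ _ 𝕜).map Polynomial.C).det
  have eval_p (t : 𝕜) : p.eval t = (1 + t • M).det := by
    rw [← LinearMap.det_toMatrix b, ← Polynomial.coe_evalRingHom, RingHom.map_det]
    congr 1
    ext i j
    simp [A, Matrix.one_apply, apply_ite (Polynomial.eval t), add_comm (ite _ _ _), mul_comm t]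
  have degree_p : p.degree < s.card := by
    refine Polynomial.degree_le_natDegree.trans_lt ?_
    have := Polynomial.natDegree_det_X_add_C_le A 1
    rw [Fintype.card_fin] at this
    exact_mod_cast this.trans_lt hs
  rw [← eval_p, Lagrange.eq_interpolate Function.injective_id.injOn degree_p,
    Lagrange.interpolate_apply, Polynomial.eval_finsetSum]
  exact Finset.sum_congr rfl fun t _ => by simp [eval_p, mul_comm]

theorem sum_eval_lagrangeBasis_eq_one {𝕜 : Type*} [Field 𝕜] [DecidableEq 𝕜] {s : Finset 𝕜}
    (hs : s.Nonempty) (c : 𝕜) : ∑ t ∈ s, (Lagrange.basis s id t).eval c = 1 := by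
  rw [← Polynomial.eval_finsetSum, Lagrange.sum_basis Function.injective_id.injOn hs,
    Polynomial.eval_one]

section NormedSpace

variable {E : Type*} [NormedAddCommGroup E] [NormedSpace ℝ E]

theorem bijective_add_smul_of_lipschitzWith [CompleteSpace E] {h : E → E} {K : ℝ≥0}
    (hh : LipschitzWith K h) {t : ℝ} (ht : ‖t‖₊ * K < 1) :
    Function.Bijective fun x => x + t • h x := by
  have approx : ApproximatesLinearOn (fun x => x + t • h x)
      (ContinuousLinearEquiv.refl ℝ E : E →L[ℝ] E) univ (‖t‖₊ * K) := by
    rw [ApproximatesLinearOn.approximatesLinearOn_iff_lipschitzOnWith, lipschitzOnWith_univ]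
    simpa [Function.comp_def, Pi.sub_def] using (lipschitzWith_smul t).comp hh
  have hc : Subsingleton E ∨
      ‖t‖₊ * K < ‖((ContinuousLinearEquiv.refl ℝ E).symm : E →L[ℝ] E)‖₊⁻¹ := by
    rcases subsingleton_or_nontrivial E with h | h
    · exact .inl h
    · exact .inr (by simpa using ht)
  exact ⟨injOn_univ.1 (approx.injOn hc), approx.surjective hc⟩

theorem eventually_forall_norm_le_det_one_add_smul_pos [FiniteDimensional ℝ E] (K : ℝ) :
    ∀ᶠ t : ℝ in nhds 0, ∀ M : E →L[ℝ] E, ‖M‖ ≤ K → 0 < (1 + t • M).det := by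
  have := (isCompact_closedBall (0 : E →L[ℝ] E) K).eventually_forall_of_forall_eventually
    (x₀ := (0 : ℝ)) (P := fun t M => 0 < (1 + t • M).det) fun M _ => ?_
  · simpa only [mem_closedBall_zero_iff] using this
  · have cont : Continuous fun z : ℝ × (E →L[ℝ] E) => (1 + z.1 • z.2).det :=
      ContinuousLinearMap.continuous_det.comp (by fun_prop)
    exact cont.continuousAt.eventually (lt_mem_nhds (by simp [ContinuousLinearMap.det]))

end NormedSpace

section ChangeOfVariables
variable {E : Type*} [NormedAddCommGroup E] [NormedSpace ℝ E] [FiniteDimensional ℝ E]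
  [MeasurableSpace E] [BorelSpace E] (μ : Measure E) [μ.IsAddHaarMeasure]

theorem setIntegral_det_fderiv_of_bijOn {f : E → E} {f' : E → E →L[ℝ] E} {O : Set E}
    (hO : MeasurableSet O) (hμ : μ O ≠ ⊤) (hf : ∀ x ∈ O, HasFDerivWithinAt f (f' x) O x)
    (hbij : BijOn f O O) (hpos : ∀ x ∈ O, 0 ≤ (f' x).det) :
    IntegrableOn (fun x => (f' x).det) O μ ∧ ∫ x in O, (f' x).det ∂μ = μ.real O := by
  have abs_det : EqOn (fun x => |(f' x).det| • (1 : ℝ)) (fun x => (f' x).det) O := fun x hx => by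
    simp [abs_of_nonneg (hpos x hx)]
  constructor
  · refine IntegrableOn.congr_fun ?_ abs_det hO
    rw [← integrableOn_image_iff_integrableOn_abs_det_fderiv_smul μ hO hf
      hbij.injOn fun _ => (1 : ℝ), hbij.image_eq]
    exact integrableOn_const hμ
  · rw [← setIntegral_congr_fun hO abs_det,
      ← integral_image_eq_integral_abs_det_fderiv_smul μ hO hf
      hbij.injOn fun _ => (1 : ℝ), hbij.image_eq]
    simp

theorem setIntegral_det_one_add_fderiv {h : E → E} {K : ℝ≥0} (hh : LipschitzWith K h) {O : Set E}
    (hO : IsOpen O) (hμ : μ O ≠ ⊤) (hd : DifferentiableOn ℝ h O)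
    (hmem : ∀ t ∈ Ioo (0 : ℝ) 1, ∀ x, x + t • h x ∈ O ↔ x ∈ O) :
    ∫ x in O, (1 + fderiv ℝ h x).det ∂μ = μ.real O := by
  have small : ∀ᶠ t : ℝ in nhds 0, ‖t‖₊ * K < 1 ∧ t < 1 ∧
      ∀ M : E →L[ℝ] E, ‖M‖ ≤ K → 0 < (1 + t • M).det := by
    refine .and ?_ ((gt_mem_nhds one_pos).and (eventually_forall_norm_le_det_one_add_smul_pos _))
    have : Continuous fun t : ℝ => ‖t‖₊ * K := by fun_prop
    exact this.continuousAt.eventually (gt_mem_nhds (by simp))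
  obtain ⟨δ, δ_pos, hδ⟩ := Metric.eventually_nhds_iff_ball.1 small
  obtain ⟨s, hs, card_s⟩ := (Ioo_infinite δ_pos).exists_subset_card_eq (Module.finrank ℝ E + 1)
  have integral_det (t : ℝ) (ht : t ∈ s) : IntegrableOn (fun x => (1 + t • fderiv ℝ h x).det) O μ ∧
      ∫ x in O, (1 + t • fderiv ℝ h x).det ∂μ = μ.real O := by
    have ht0 := (hs ht).1
    obtain ⟨htK, ht1, htdet⟩ := hδ t (by simp [abs_of_pos ht0, (hs ht).2])
    have bij := bijective_add_smul_of_lipschitzWith hh htK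
    refine setIntegral_det_fderiv_of_bijOn μ (f := fun x => x + t • h x) hO.measurableSet hμ
      (fun x hx => ?_) ⟨fun x hx => (hmem t ⟨ht0, ht1⟩ x).2 hx, bij.injective.injOn, fun y hy => ?_⟩
      fun x _ => (htdet _ (norm_fderiv_le_of_lipschitz ℝ hh)).le
    · have := (hd.hasFDerivAt (hO.mem_nhds hx)).const_smul t
      exact ((hasFDerivAt_id x).add this).hasFDerivWithinAt
    · obtain ⟨x, rfl⟩ := bij.surjective y
      exact ⟨x, (hmem t ⟨ht0, ht1⟩ x).1 hy, rfl⟩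
  have det_eq (x : E) : (1 + fderiv ℝ h x).det =
      ∑ t ∈ s, (Lagrange.basis s id t).eval 1 * (1 + t • fderiv ℝ h x).det := by
    simpa using! (sum_eval_lagrangeBasis_mul_det_one_add_smul (fderiv ℝ h x).toLinearMap
      (card_s ▸ Nat.lt_succ_self _) 1).symm
  simp_rw [det_eq]
  rw [integral_finsetSum _ fun t ht => (integral_det t ht).1.const_mul _]
  simp_rw [integral_const_mul]
  rw [Finset.sum_congr rfl fun t ht => by rw [(integral_det t ht).2], ← Finset.sum_mul,
    sum_eval_lagrangeBasis_eq_one (Finset.card_pos.1 (by omega)), one_mul]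

end ChangeOfVariables

section Cube

variable {ι : Type*}

/-- The coordinatewise retraction of `ι → ℝ` onto the unit cube. -/
noncomputable def cubeProj (x : ι → ℝ) : ι → I := fun k => projIcc 0 1 zero_le_one (x k)

theorem continuous_cubeProj : Continuous (cubeProj : (ι → ℝ) → ι → I) :=
  continuous_pi fun k => continuous_projIcc.comp (continuous_apply k)

theorem coe_cubeProj_mem_Icc (x : ι → ℝ) : (fun k => (cubeProj x k : ℝ)) ∈ Icc (0 : ι → ℝ) 1 :=
  ⟨fun k => (cubeProj x k).2.1, fun k => (cubeProj x k).2.2⟩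

theorem coe_cubeProj_apply_of_mem {x : ι → ℝ} (hx : x ∈ Icc 0 1) (k : ι) :
    (cubeProj x k : ℝ) = x k :=
  congrArg Subtype.val (projIcc_of_mem zero_le_one ⟨hx.1 k, hx.2 k⟩)

theorem lipschitzWith_coe_cubeProj [Fintype ι] :
    LipschitzWith 1 fun (x : ι → ℝ) k => (cubeProj x k : ℝ) :=
  LipschitzWith.of_dist_le_mul fun x y => by
    rw [NNReal.coe_one, one_mul, dist_pi_le_iff dist_nonneg]
    intro k
    exact ((LipschitzWith.projIcc zero_le_one).dist_le_mul (x k) (y k)).trans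
      (by simpa using dist_le_pi_dist x y k)

/-- A self-map of `ι → ℝ` which maps the unit cube and each of its facets into itself. -/
structure PreservesCubeFaces (g : (ι → ℝ) → ι → ℝ) : Prop where
  mapsTo : MapsTo g (Icc 0 1) (Icc 0 1)
  eq_zero : ∀ x ∈ Icc 0 1, ∀ k, x k = 0 → g x k = 0
  eq_one : ∀ x ∈ Icc 0 1, ∀ k, x k = 1 → g x k = 1

theorem PreservesCubeFaces.add_smul_mem_pi_Ioo_iff {g : (ι → ℝ) → ι → ℝ}
    (hg : PreservesCubeFaces g) {t : ℝ} (ht : t ∈ Ioo 0 1) (x : ι → ℝ) :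
    (x + t • (g (fun k => cubeProj x k) - fun k => (cubeProj x k : ℝ)) ∈
      univ.pi fun _ => Ioo (0 : ℝ) 1) ↔ x ∈ univ.pi fun _ => Ioo (0 : ℝ) 1 := by
  set q : ι → ℝ := fun k => cubeProj x k with hq
  have q_mem : q ∈ Icc 0 1 := coe_cubeProj_mem_Icc x
  simp only [mem_univ_pi, Pi.add_apply, Pi.smul_apply, Pi.sub_apply, smul_eq_mul]
  refine forall_congr' fun k => ?_
  obtain ⟨ht0, ht1⟩ := ht
  rcases le_or_gt (x k) 0 with h0 | h0
  · have hqk : q k = 0 := by simp [hq, cubeProj, projIcc_of_le_left zero_le_one h0]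
    rw [hg.eq_zero q q_mem k hqk, hqk]
    simp
  rcases le_or_gt 1 (x k) with h1 | h1
  · have hqk : q k = 1 := by simp [hq, cubeProj, projIcc_of_right_le zero_le_one h1]
    rw [hg.eq_one q q_mem k hqk, hqk]
    simp
  · have hqk : q k = x k := by simp [hq, cubeProj, projIcc_of_mem zero_le_one ⟨h0.le, h1.le⟩]
    have g0 : 0 ≤ g q k := (hg.mapsTo q_mem).1 k
    have g1 : g q k ≤ 1 := (hg.mapsTo q_mem).2 k
    rw [hqk]
    refine iff_of_true ⟨?_, ?_⟩ ⟨h0, h1⟩ <;> nlinarith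

theorem PreservesCubeFaces.exists_det_fderiv_ne_zero [Fintype ι] {g : (ι → ℝ) → ι → ℝ}
    (hg : PreservesCubeFaces g) (contDiff_g : ContDiff ℝ 1 g) :
    ∃ x ∈ Icc (0 : ι → ℝ) 1, (fderiv ℝ g x).det ≠ 0 := by
  let q : (ι → ℝ) → ι → ℝ := fun x k => cubeProj x k
  let O : Set (ι → ℝ) := univ.pi fun _ => Ioo 0 1
  have isOpen_O : IsOpen O := isOpen_set_pi finite_univ fun _ _ => isOpen_Ioo
  have O_subset : O ⊆ Icc 0 1 :=
    fun x hx => ⟨fun k => (hx k trivial).1.le, fun k => (hx k trivial).2.le⟩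
  have volume_O : volume O = 1 := by simp [O, Real.volume_pi_Ioo]
  obtain ⟨K, hK⟩ := contDiff_g.contDiffOn.exists_lipschitzOnWith one_ne_zero
    (convex_Icc (0 : ι → ℝ) 1) isCompact_Icc
  have lipschitz_gq : LipschitzWith K (g ∘ q) := by
    simpa using hK.comp (lipschitzWith_coe_cubeProj.lipschitzOnWith (s := univ))
      fun x _ => coe_cubeProj_mem_Icc x
  have eventuallyEq {x} (hx : x ∈ O) : (fun y => g (q y) - q y) =ᶠ[nhds x] fun y => g y - y := by
    filter_upwards [isOpen_O.mem_nhds hx] with y hy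
    rw [show q y = y from funext (coe_cubeProj_apply_of_mem (O_subset hy))]
  have hasFDerivAt {x} (hx : x ∈ O) :
      HasFDerivAt (fun y => g (q y) - q y) (fderiv ℝ g x - 1) x :=
    ((contDiff_g.differentiable one_ne_zero x).hasFDerivAt.sub
      (hasFDerivAt_id x)).congr_of_eventuallyEq (eventuallyEq hx)
  have integral := setIntegral_det_one_add_fderiv volume
    (lipschitz_gq.sub lipschitzWith_coe_cubeProj) isOpen_O (by simp [volume_O])
    (fun x hx => (hasFDerivAt hx).differentiableAt.differentiableWithinAt)
    fun t ht x => hg.add_smul_mem_pi_Ioo_iff ht x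
  by_contra! det_eq_zero
  have integrand_eq_zero : EqOn (fun x => (1 + fderiv ℝ (fun y => g (q y) - q y) x).det) 0 O :=
    fun x hx => by
      beta_reduce
      rw [(hasFDerivAt hx).fderiv, add_sub_cancel]
      exact det_eq_zero x (O_subset hx)
  have : (∫ x in O, (1 + fderiv ℝ (fun y => g (q y) - q y) x).det) = volume.real O := integral
  rw [setIntegral_congr_fun isOpen_O.measurableSet integrand_eq_zero] at this
  simp [measureReal_def, volume_O] at this

end Cube

theorem det_sum_smulRight_eq_zero {𝕜 V α : Type*} [Field 𝕜] [AddCommGroup V] [Module 𝕜 V]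
    [FiniteDimensional 𝕜 V] {s : Finset α} (hs : s.Nonempty) (hcard : s.card ≤ Module.finrank 𝕜 V)
    {l : α → V →ₗ[𝕜] 𝕜} (hl : ∑ i ∈ s, l i = 0) (p : α → V) :
    (∑ i ∈ s, (l i).smulRight (p i)).det = 0 := by
  classical
  obtain ⟨i₀, hi₀⟩ := hs
  have ker_ne_bot : LinearMap.ker (LinearMap.pi fun i : s.erase i₀ => l i) ≠ ⊥ := by
    apply LinearMap.ker_ne_bot_of_finrank_lt
    have := Finset.card_pos.2 ⟨i₀, hi₀⟩
    rw [Module.finrank_fintype_fun_eq_card, Fintype.card_coe, Finset.card_erase_of_mem hi₀]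
    omega
  obtain ⟨v, hv, v_ne⟩ := Submodule.exists_mem_ne_zero_of_ne_bot ker_ne_bot
  have l_erase (i : α) (hi : i ∈ s.erase i₀) : l i v = 0 := congrFun hv ⟨i, hi⟩
  have l_i₀ : l i₀ v = 0 := by
    have := congrArg (· v) hl
    rwa [← Finset.add_sum_erase s l hi₀, LinearMap.add_apply, LinearMap.sum_apply,
      Finset.sum_eq_zero l_erase, add_zero] at this
  refine LinearMap.det_eq_zero_iff_ker_ne_bot.2 fun h => v_ne ?_
  rw [← Submodule.mem_bot 𝕜, ← h, LinearMap.mem_ker, LinearMap.sum_apply]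
  refine Finset.sum_eq_zero fun i hi => ?_
  have : l i v = 0 := if h : i = i₀ then h ▸ l_i₀ else l_erase i (Finset.mem_erase.2 ⟨h, hi⟩)
  rw [LinearMap.smulRight_apply, this, zero_smul]

theorem det_fderiv_sum_smul_eq_zero {E κ : Type*} [NormedAddCommGroup E] [NormedSpace ℝ E]
    [FiniteDimensional ℝ E] [Fintype κ] {f : κ → E → ℝ} (hf : ∀ w, Differentiable ℝ (f w))
    (nonneg : ∀ w x, 0 ≤ f w x) (sum_eq_one : ∀ x, ∑ w, f w x = 1) (p : κ → E) {x : E}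
    (hx : (Finset.univ.filter fun w => f w x ≠ 0).card ≤ Module.finrank ℝ E) :
    (fderiv ℝ (fun y => ∑ w, f w y • p w) x).det = 0 := by
  set s := Finset.univ.filter fun w => f w x ≠ 0
  have hasFDerivAt (w : κ) : HasFDerivAt (f w) (fderiv ℝ (f w) x) x := (hf w x).hasFDerivAt
  have s_nonempty : s.Nonempty := by
    obtain ⟨w, -, hw⟩ := Finset.exists_ne_zero_of_sum_ne_zero (sum_eq_one x ▸ one_ne_zero)
    exact ⟨w, by simpa [s] using hw⟩
  -- A nonnegative function is minimal, hence critical, where it vanishes.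
  have fderiv_eq_zero (w : κ) (hw : w ∉ s) : fderiv ℝ (f w) x = 0 := by
    have : f w x = 0 := by simpa [s] using hw
    exact IsLocalMin.fderiv_eq_zero (.of_forall fun y => this ▸ nonneg w y)
  have sum_fderiv : ∑ w ∈ s, fderiv ℝ (f w) x = 0 := by
    rw [Finset.sum_subset s.subset_univ fun w _ hw => fderiv_eq_zero w hw,
      ← (HasFDerivAt.fun_sum fun w _ => hasFDerivAt w).fderiv]
    simp [sum_eq_one]
  have fderiv_sum : fderiv ℝ (fun y => ∑ w, f w y • p w) x =
      ∑ w ∈ s, (fderiv ℝ (f w) x).smulRight (p w) := by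
    rw [(HasFDerivAt.fun_sum fun w _ => (hasFDerivAt w).smul_const (p w)).fderiv]
    refine (Finset.sum_subset s.subset_univ fun w _ hw => ?_).symm
    rw [fderiv_eq_zero w hw]
    ext
    simp
  rw [fderiv_sum, ContinuousLinearMap.det, ContinuousLinearMap.toLinearMap_sum]
  refine det_sum_smulRight_eq_zero s_nonempty hx
    (l := fun w => (fderiv ℝ (f w) x : E →ₗ[ℝ] ℝ)) ?_ p
  rw [← ContinuousLinearMap.toLinearMap_sum, sum_fderiv, ContinuousLinearMap.toLinearMap_zero]

theorem exists_card_lt_card_filter_ne_zero {ι κ : Type*} [Fintype ι] [Fintype κ]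
    {f : κ → (ι → ℝ) → ℝ} (hf : ∀ w, ContDiff ℝ 1 (f w)) (nonneg : ∀ w x, 0 ≤ f w x)
    (sum_eq_one : ∀ x, ∑ w, f w x = 1) {p : κ → ι → ℝ} (hp : ∀ w, p w ∈ Icc 0 1)
    (zero : ∀ w, ∀ x ∈ Icc 0 1, ∀ k, f w x ≠ 0 → x k = 0 → p w k = 0)
    (one : ∀ w, ∀ x ∈ Icc 0 1, ∀ k, f w x ≠ 0 → x k = 1 → p w k = 1) :
    ∃ x ∈ Icc (0 : ι → ℝ) 1, Fintype.card ι < (Finset.univ.filter fun w => f w x ≠ 0).card := by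
  have apply_eq {c : ℝ} {x : ι → ℝ} {k : ι} (h : ∀ w, f w x ≠ 0 → p w k = c) :
      (∑ w, f w x • p w) k = c := by
    rw [Finset.sum_apply, ← one_mul c, ← sum_eq_one x, Finset.sum_mul]
    refine Finset.sum_congr rfl fun w _ => ?_
    by_cases hw : f w x = 0
    · simp [hw]
    · rw [Pi.smul_apply, h w hw, smul_eq_mul]
  have preserves : PreservesCubeFaces fun x => ∑ w, f w x • p w :=
    { mapsTo := fun x _ =>
        (convex_Icc 0 1).sum_mem (fun w _ => nonneg w x) (sum_eq_one x) fun w _ => hp w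
      eq_zero := fun x hx k hxk => apply_eq fun w hw => zero w x hx k hw hxk
      eq_one := fun x hx k hxk => apply_eq fun w hw => one w x hx k hw hxk }
  obtain ⟨x, hx, hdet⟩ := preserves.exists_det_fderiv_ne_zero
    (ContDiff.sum fun w _ => (hf w).smul contDiff_const)
  refine ⟨x, hx, not_le.1 fun hcard => hdet ?_⟩
  exact det_fderiv_sum_smul_eq_zero (fun w => (hf w).differentiable one_ne_zero) nonneg sum_eq_one p
    (by rwa [Module.finrank_fintype_fun_eq_card])

theorem exists_card_lt_encard_setOf_mem {ι κ : Type*} [Fintype ι] {V : κ → Set (ι → I)}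
    (isOpen_V : ∀ w, IsOpen (V w)) (V_cover : ⋃ w, V w = univ)
    (hV : ∀ w k, (∀ x ∈ V w, x k ≠ 0) ∨ ∀ x ∈ V w, x k ≠ 1) :
    ∃ x, (Fintype.card ι : ℕ∞) < {w | x ∈ V w}.encard := by
  classical
  obtain ⟨F, hF⟩ := isCompact_univ.elim_finite_subcover V isOpen_V V_cover.ge
  obtain ⟨f, hf⟩ := SmoothPartitionOfUnity.exists_isSubordinate (modelWithCornersSelf ℝ (ι → ℝ))
    isClosed_univ (fun w : F => cubeProj ⁻¹' V w)
    (fun w => (isOpen_V w).preimage continuous_cubeProj)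
    (fun x _ => by
      obtain ⟨w, hw, hxw⟩ := mem_iUnion₂.1 (hF (mem_univ (cubeProj x)))
      exact mem_iUnion.2 ⟨⟨w, hw⟩, hxw⟩)
  have mem_of_ne_zero {w : F} {x : ι → ℝ} (hx : f w x ≠ 0) : cubeProj x ∈ V w :=
    hf w (subset_tsupport _ hx)
  have cubeProj_eq {c : I} {x : ι → ℝ} (hx : x ∈ Icc 0 1) {k : ι} (hxk : x k = c) :
      cubeProj x k = c :=
    Subtype.ext ((coe_cubeProj_apply_of_mem hx k).trans hxk)
  obtain ⟨x, -, hcard⟩ := exists_card_lt_card_filter_ne_zero (f := fun w => f w)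
    (p := fun w k => if ∀ x ∈ V w, x k ≠ 0 then 1 else 0)
    (fun w => (f w).contMDiff.contDiff.of_le (by simp)) (fun w x => f.nonneg w x)
    (fun x => by rw [← finsum_eq_sum_of_fintype]; exact f.sum_eq_one (mem_univ x))
    (fun w => ⟨fun k => by positivity, fun k => ite_le_one le_rfl zero_le_one⟩)
    (fun w x hx k hwx hxk => if_neg fun hw => hw _ (mem_of_ne_zero hwx) (cubeProj_eq hx hxk))
    (fun w x hx k hwx hxk => if_pos <| (hV w k).resolve_right fun hw =>
      hw _ (mem_of_ne_zero hwx) (cubeProj_eq hx hxk))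
  refine ⟨cubeProj x, (Nat.cast_lt.2 hcard).trans_le ?_⟩
  rw [← encard_coe_eq_coe_finsetCard, ← Subtype.val_injective.injOn.encard_image]
  refine encard_le_encard ?_
  rintro _ ⟨w, hw, rfl⟩
  exact mem_of_ne_zero (Finset.mem_filter.1 hw).2

theorem CovDimLE.exists_cover_disjoint_or_disjoint {T ι : Type*} [TopologicalSpace T] [Finite ι]
    {n : ℕ} (hT : CovDimLE T n) {A B : ι → Set T} (hA : ∀ k, IsClosed (A k))
    (hB : ∀ k, IsClosed (B k)) (hAB : ∀ k, Disjoint (A k) (B k)) :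
    ∃ V : Set (Set T), (∀ w ∈ V, IsOpen w) ∧ ⋃₀ V = univ ∧
      (∀ w ∈ V, ∀ k, Disjoint w (A k) ∨ Disjoint w (B k)) ∧
      ∀ x, {w ∈ V | x ∈ w}.encard ≤ n + 1 := by
  obtain ⟨V, isOpen_V, V_cover, V_refine, V_mult⟩ := hT
    {u | IsOpen u ∧ ∀ k, Disjoint u (A k) ∨ Disjoint u (B k)} (fun u hu => hu.1)
    (eq_univ_of_forall fun x => by
      have avoid (k : ι) : ∃ u, IsOpen u ∧ x ∈ u ∧ (Disjoint u (A k) ∨ Disjoint u (B k)) := by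
        by_cases hx : x ∈ A k
        · exact ⟨(B k)ᶜ, (hB k).isOpen_compl, disjoint_left.1 (hAB k) hx, .inr disjoint_compl_left⟩
        · exact ⟨(A k)ᶜ, (hA k).isOpen_compl, hx, .inl disjoint_compl_left⟩
      choose u isOpen_u mem_u disjoint_u using avoid
      refine ⟨⋂ k, u k, ⟨isOpen_iInter_of_finite isOpen_u, fun k => ?_⟩, mem_iInter.2 mem_u⟩
      exact (disjoint_u k).imp (.mono_left (iInter_subset u k)) (.mono_left (iInter_subset u k)))
  refine ⟨V, isOpen_V, V_cover, fun w hw k => ?_, V_mult⟩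
  obtain ⟨u, ⟨-, hu⟩, hwu⟩ := V_refine w hw
  exact (hu k).imp (.mono_left hwu) (.mono_left hwu)

theorem not_covDimLE_of_separated_faces {T ι : Type*} [TopologicalSpace T] [T2Space T] [Fintype ι]
    {φ : (ι → I) → T} (hφ : Continuous φ)
    (separated : ∀ k x y, x k = 0 → y k = 1 → φ x ≠ φ y) {n : ℕ} (hn : n < Fintype.card ι) :
    ¬ CovDimLE T n := by
  intro covDim
  let A (c : I) (k : ι) : Set T := φ '' {x | x k = c}
  have isClosed_A (c : I) (k : ι) : IsClosed (A c k) :=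
    ((isClosed_eq (continuous_apply k) continuous_const).isCompact.image hφ).isClosed
  have disjoint_A (k : ι) : Disjoint (A 0 k) (A 1 k) := by
    rw [disjoint_left]
    rintro _ ⟨x, hx, rfl⟩ ⟨y, hy, hyx⟩
    exact separated k x y hx hy hyx.symm
  obtain ⟨V, isOpen_V, V_cover, V_disjoint, V_mult⟩ :=
    covDim.exists_cover_disjoint_or_disjoint (isClosed_A 0) (isClosed_A 1) disjoint_A
  have ne_of_disjoint (w : V) {c : I} {k : ι} (h : Disjoint w.1 (A c k)) :
      ∀ x ∈ φ ⁻¹' w, x k ≠ c :=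
    fun x hxw hxk => disjoint_left.1 h hxw ⟨x, hxk, rfl⟩
  obtain ⟨x, hx⟩ := exists_card_lt_encard_setOf_mem (V := fun w : V => φ ⁻¹' w)
    (fun w => (isOpen_V w w.2).preimage hφ)
    (by rw [← preimage_iUnion, ← sUnion_eq_iUnion, V_cover, preimage_univ])
    fun w k => (V_disjoint w w.2 k).imp (ne_of_disjoint w) (ne_of_disjoint w)
  have encard_le : {w : V | φ x ∈ w.1}.encard ≤ n + 1 := by
    rw [← Subtype.val_injective.injOn.encard_image]
    refine (encard_le_encard ?_).trans (V_mult (φ x))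
    rintro _ ⟨w, hw, rfl⟩
    exact ⟨w.2, hw⟩
  have := hx.trans_le encard_le
  norm_cast at this
  omega

section CAT0

variable {X Y : Type*} [MetricSpace X] [MetricSpace Y]

/-- `γ` restricts to a constant speed geodesic `[0, 1] → X` from `x` to `y` along which every point
of `X` satisfies the comparison inequality defining CAT(0) spaces. -/
structure IsComparisonGeodesic (γ : ℝ → X) (x y : X) : Prop where
  source : γ 0 = x
  target : γ 1 = y
  dist_eq : ∀ s ∈ Icc (0 : ℝ) 1, ∀ t ∈ Icc (0 : ℝ) 1, dist (γ s) (γ t) = |s - t| * dist x y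
  dist_sq_le : ∀ z, ∀ t ∈ Icc (0 : ℝ) 1, dist z (γ t) ^ 2 ≤
    (1 - t) * dist z x ^ 2 + t * dist z y ^ 2 - t * (1 - t) * dist x y ^ 2

theorem IsComparisonGeodesic.eqOn {γ γ' : ℝ → X} {x y : X} (hγ : IsComparisonGeodesic γ x y)
    (h0 : γ' 0 = x) (h1 : γ' 1 = y)
    (hγ' : ∀ s ∈ Icc (0 : ℝ) 1, ∀ t ∈ Icc (0 : ℝ) 1, dist (γ' s) (γ' t) = |s - t| * dist x y) :
    EqOn γ' γ (Icc 0 1) := by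
  intro t ht
  have dist_source : dist (γ' t) x = t * dist x y := by
    simpa [h0, abs_of_nonneg ht.1] using hγ' t ht 0 (left_mem_Icc.2 zero_le_one)
  have dist_target : dist (γ' t) y = (1 - t) * dist x y := by
    simpa [h1, abs_sub_comm t, abs_of_nonneg (sub_nonneg.2 ht.2)] using
      hγ' t ht 1 (right_mem_Icc.2 zero_le_one)
  have dist_sq_le := hγ.dist_sq_le (γ' t) t ht
  rw [dist_source, dist_target] at dist_sq_le
  have : dist (γ' t) (γ t) ^ 2 ≤ 0 := by linarith
  exact dist_eq_zero.1 (pow_eq_zero_iff two_ne_zero |>.1 (this.antisymm (sq_nonneg _)))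

theorem isCAT0Space_iff_exists_isComparisonGeodesic :
    IsCAT0Space X ↔ ∀ x y : X, ∃ γ, IsComparisonGeodesic γ x y := by
  refine ⟨fun hX x y => ?_, fun hX => ⟨fun x y => ?_, fun x y z γ' h0 h1 h2 t ht => ?_⟩⟩
  · obtain ⟨γ, h0, h1, h2⟩ := hX.1 x y
    exact ⟨γ, h0, h1, h2, fun z => hX.2 x y z γ h0 h1 h2⟩
  · obtain ⟨γ, hγ⟩ := hX x y
    exact ⟨γ, hγ.source, hγ.target, hγ.dist_eq⟩
  · obtain ⟨γ, hγ⟩ := hX x y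
    rw [hγ.eqOn h0 h1 h2 ht]
    exact hγ.dist_sq_le z t ht

theorem isCAT0Space_of_subsingleton [Subsingleton X] : IsCAT0Space X :=
  isCAT0Space_iff_exists_isComparisonGeodesic.2 fun x y =>
    ⟨fun _ => x, rfl, Subsingleton.elim x y, by simp [Subsingleton.elim y x], fun z => by
      simp [Subsingleton.elim y x, Subsingleton.elim z x]⟩

theorem IsCAT0Space.of_homothety (hX : IsCAT0Space X) {f : X → Y} (hf : Function.Surjective f)
    {c : ℝ} (hc : ∀ x y, dist (f x) (f y) = c * dist x y) : IsCAT0Space Y := by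
  rw [isCAT0Space_iff_exists_isComparisonGeodesic] at hX ⊢
  refine hf.forall₂.2 fun x y => ?_
  obtain ⟨γ, hγ⟩ := hX x y
  refine ⟨f ∘ γ, congrArg f hγ.source, congrArg f hγ.target, fun s hs t ht => ?_,
    hf.forall.2 fun z t ht => ?_⟩
  · rw [Function.comp_apply, Function.comp_apply, hc, hc, hγ.dist_eq s hs t ht, mul_left_comm]
  · have := mul_le_mul_of_nonneg_left (hγ.dist_sq_le z t ht) (sq_nonneg c)
    simp only [Function.comp_apply, hc]
    linarith

theorem IsCAT0Space.of_isometryEquiv (hX : IsCAT0Space X) (e : X ≃ᵢ Y) : IsCAT0Space Y :=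
  hX.of_homothety e.surjective (c := 1) fun x y => by rw [e.dist_eq, one_mul]

theorem toGHSpace_mem_GHCat0 [CompactSpace X] [Nonempty X] (hX : IsCAT0Space X) :
    toGHSpace X ∈ GHCat0 :=
  let ⟨e⟩ := toGHSpace_eq_toGHSpace_iff_isometryEquiv.1 (toGHSpace X).toGHSpace_rep.symm
  hX.of_isometryEquiv e

theorem dist_sq_withLp_prod (p q : WithLp 2 (X × Y)) :
    dist p q ^ 2 = dist p.fst q.fst ^ 2 + dist p.snd q.snd ^ 2 := by
  rw [WithLp.prod_dist_eq_add (by norm_num)]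
  simp only [ENNReal.toReal_ofNat, Real.rpow_ofNat]
  rw [← Real.sqrt_eq_rpow, Real.sq_sqrt (by positivity)]

theorem IsCAT0Space.prod (hX : IsCAT0Space X) (hY : IsCAT0Space Y) :
    IsCAT0Space (WithLp 2 (X × Y)) := by
  rw [isCAT0Space_iff_exists_isComparisonGeodesic] at hX hY ⊢
  intro p q
  obtain ⟨γ, hγ⟩ := hX p.fst q.fst
  obtain ⟨η, hη⟩ := hY p.snd q.snd
  refine ⟨fun t => WithLp.toLp 2 (γ t, η t), ?_, ?_, fun s hs t ht => ?_, fun z t ht => ?_⟩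
  · simp only [hγ.source, hη.source]; rfl
  · simp only [hγ.target, hη.target]; rfl
  · rw [← sq_eq_sq₀ dist_nonneg (by positivity), mul_pow, dist_sq_withLp_prod, dist_sq_withLp_prod]
    simp only [WithLp.toLp_fst, WithLp.toLp_snd, hγ.dist_eq s hs t ht, hη.dist_eq s hs t ht]
    ring
  · have hX := hγ.dist_sq_le z.fst t ht
    have hY := hη.dist_sq_le z.snd t ht
    simp only [dist_sq_withLp_prod, WithLp.toLp_fst, WithLp.toLp_snd]
    linarith

theorem dist_lineMap_sq {H : Type*} [NormedAddCommGroup H] [InnerProductSpace ℝ H] (z a b : H)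
    (t : ℝ) : dist z (AffineMap.lineMap a b t) ^ 2 =
      (1 - t) * dist z a ^ 2 + t * dist z b ^ 2 - t * (1 - t) * dist a b ^ 2 := by
  have sub_lineMap : z - AffineMap.lineMap a b t = (1 - t) • (z - a) + t • (z - b) := by
    rw [AffineMap.lineMap_apply_module]
    module
  have sub_eq : a - b = (z - b) - (z - a) := by abel
  simp only [dist_eq_norm, sub_lineMap, sub_eq, ← real_inner_self_eq_norm_sq, inner_add_left,
    inner_add_right, inner_sub_left, inner_sub_right, real_inner_smul_right,
    real_inner_comm]
  ring

theorem isCAT0Space_of_convex {H : Type*} [NormedAddCommGroup H] [InnerProductSpace ℝ H] {C : Set H}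
    (hC : Convex ℝ C) : IsCAT0Space C := by
  refine isCAT0Space_iff_exists_isComparisonGeodesic.2 fun x y => ?_
  have mem (t : ℝ) : AffineMap.lineMap x.1 y.1 (projIcc (0 : ℝ) 1 zero_le_one t : ℝ) ∈ C :=
    hC.lineMap_mem x.2 y.2 (projIcc (0 : ℝ) 1 zero_le_one t).2
  have projIcc_eq {t : ℝ} (ht : t ∈ Icc (0 : ℝ) 1) : (projIcc (0 : ℝ) 1 zero_le_one t : ℝ) = t :=
    congrArg Subtype.val (projIcc_of_mem zero_le_one ht)
  refine ⟨fun t => ⟨_, mem t⟩, Subtype.ext ?_, Subtype.ext ?_, fun s hs t ht => ?_,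
    fun z t ht => ?_⟩
  · simp
  · simp
  · simp only [Subtype.dist_eq, projIcc_eq hs, projIcc_eq ht, dist_lineMap_lineMap, Real.dist_eq]
  · simp only [Subtype.dist_eq, projIcc_eq ht, dist_lineMap_sq, le_refl]

end CAT0

section Range
open TopologicalSpace

variable {K Z : Type*} [TopologicalSpace K] [CompactSpace K] [Nonempty K] [MetricSpace Z]

/-- The range of a continuous map on a nonempty compact space, as a nonempty compact set. -/
def compactRange (f : C(K, Z)) : NonemptyCompacts Z where
  carrier := range f
  isCompact' := isCompact_range f.continuous
  nonempty' := range_nonempty f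

theorem dist_compactRange_le (f g : C(K, Z)) :
    dist (compactRange f) (compactRange g) ≤ dist f g := by
  rw [NonemptyCompacts.dist_eq]
  refine hausdorffDist_le_of_mem_dist dist_nonneg ?_ ?_
  · rintro _ ⟨x, rfl⟩
    exact ⟨g x, mem_range_self x, f.dist_apply_le_dist x⟩
  · rintro _ ⟨x, rfl⟩
    exact ⟨f x, mem_range_self x, dist_comm f g ▸ g.dist_apply_le_dist x⟩

theorem continuous_compactRange : Continuous (compactRange : C(K, Z) → NonemptyCompacts Z) :=
  (LipschitzWith.of_dist_le_mul (K := 1) fun f g => by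
    simpa using dist_compactRange_le f g).continuous

theorem subsingleton_compactRange {f : C(K, Z)} (hf : ∀ x y, f x = f y) :
    Subsingleton (compactRange f) := by
  refine ⟨?_⟩
  rintro ⟨_, x, rfl⟩ ⟨_, y, rfl⟩
  exact Subtype.ext (hf x y)

end Range

theorem toGHSpace_compactRange {K Z : Type*} [MetricSpace K] [CompactSpace K] [Nonempty K]
    [MetricSpace Z] {f : C(K, Z)} (hf : Isometry f) :
    (compactRange f).toGHSpace = toGHSpace K :=
  toGHSpace_eq_toGHSpace_iff_isometryEquiv.2 ⟨hf.isometryEquivOnRange.symm⟩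

theorem toGHSpace_eq_of_subsingleton {X Y : Type*} [MetricSpace X] [CompactSpace X] [Nonempty X]
    [Subsingleton X] [MetricSpace Y] [CompactSpace Y] [Nonempty Y] [Subsingleton Y] :
    toGHSpace X = toGHSpace Y :=
  have ⟨_⟩ := nonempty_unique X
  have ⟨_⟩ := nonempty_unique Y
  toGHSpace_eq_toGHSpace_iff_isometryEquiv.2
    ⟨⟨Equiv.ofUnique X Y, fun x y => by simp [Subsingleton.elim x y]⟩⟩

theorem joinedIn_GHCat0_toGHSpace_punit {p : GHSpace} (hp : p ∈ GHCat0) :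
    JoinedIn GHCat0 (toGHSpace PUnit.{1}) p := by
  let Φ : C(p.Rep, lp (fun _ : ℕ => ℝ) ⊤) :=
    ⟨_, (kuratowskiEmbedding.isometry p.Rep).continuous⟩
  have dist_smul (c : I) (x y : p.Rep) :
      dist (((c : ℝ) • Φ) x) (((c : ℝ) • Φ) y) = c * dist x y := by
    rw [ContinuousMap.smul_apply, ContinuousMap.smul_apply, dist_smul₀,
      Real.norm_of_nonneg c.2.1]
    exact congrArg _ ((kuratowskiEmbedding.isometry p.Rep).dist_eq x y)
  refine ⟨⟨⟨fun c : I => (compactRange ((c : ℝ) • Φ)).toGHSpace, ?_⟩, ?_, ?_⟩, fun c => ?_⟩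
  · exact toGHSpace_continuous.comp (continuous_compactRange.comp
      (continuous_subtype_val.smul continuous_const))
  · have : Subsingleton (compactRange (((0 : I) : ℝ) • Φ)) :=
      subsingleton_compactRange fun x y => dist_eq_zero.1 ((dist_smul 0 x y).trans (zero_mul _))
    exact toGHSpace_eq_of_subsingleton
  · have isometry_one : Isometry (((1 : I) : ℝ) • Φ) := Isometry.of_dist_eq fun x y => by
      simpa using dist_smul 1 x y
    exact (toGHSpace_compactRange isometry_one).trans p.toGHSpace_rep
  · exact toGHSpace_mem_GHCat0 (IsCAT0Space.of_homothety hp rangeFactorization_surjective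
      (dist_smul c))

theorem pathConnectedSpace_GHCat0 : PathConnectedSpace GHCat0 :=
  isPathConnected_iff_pathConnectedSpace.1
    ⟨toGHSpace PUnit.{1}, toGHSpace_mem_GHCat0 isCAT0Space_of_subsingleton,
      fun _ => joinedIn_GHCat0_toGHSpace_punit⟩

section Product

variable {X Y Y' Z : Type*} [MetricSpace X] [MetricSpace Y] [MetricSpace Y'] [MetricSpace Z]

instance [CompactSpace X] [CompactSpace Y] : CompactSpace (WithLp 2 (X × Y)) :=
  (WithLp.homeomorphProd 2 X Y).symm.compactSpace

instance [Nonempty X] [Nonempty Y] : Nonempty (WithLp 2 (X × Y)) :=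
  (WithLp.equiv 2 (X × Y)).nonempty

theorem dist_toLp_prodMk_left (x : X) (y y' : Y) :
    dist (WithLp.toLp 2 (x, y)) (WithLp.toLp 2 (x, y')) = dist y y' := by
  rw [← sq_eq_sq₀ dist_nonneg dist_nonneg, dist_sq_withLp_prod]
  simp only [WithLp.toLp_fst, WithLp.toLp_snd, dist_self]
  ring

theorem dist_withLp_prod_of_snd_eq {p q : WithLp 2 (X × Y)} (h : p.snd = q.snd) :
    dist p q = dist p.fst q.fst := by
  rw [← sq_eq_sq₀ dist_nonneg dist_nonneg, dist_sq_withLp_prod, h, dist_self]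
  ring

theorem isometry_withLp_prod_map {f : Y → Z} (hf : Isometry f) :
    Isometry fun p : WithLp 2 (X × Y) => WithLp.toLp 2 (p.fst, f p.snd) :=
  Isometry.of_dist_eq fun p q => by
    rw [← sq_eq_sq₀ dist_nonneg dist_nonneg, dist_sq_withLp_prod, dist_sq_withLp_prod]
    simp only [WithLp.toLp_fst, WithLp.toLp_snd, hf.dist_eq]

variable [CompactSpace X] [Nonempty X] [CompactSpace Y] [Nonempty Y] [CompactSpace Y'] [Nonempty Y']

theorem exists_mem_range_dist_le_hausdorffDist {f : Y → Z} {g : Y' → Z} (hf : Continuous f)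
    (hg : Continuous g) (y : Y) : ∃ y', dist (f y) (g y') ≤ hausdorffDist (range f) (range g) := by
  obtain ⟨_, ⟨y', rfl⟩, infDist_eq⟩ :=
    (isCompact_range hg).exists_infDist_eq_dist (range_nonempty g) (f y)
  exact ⟨y', infDist_eq ▸ infDist_le_hausdorffDist_of_mem (mem_range_self y)
    (hausdorffEDist_ne_top_of_nonempty_of_bounded (range_nonempty f) (range_nonempty g)
      (isCompact_range hf).isBounded (isCompact_range hg).isBounded)⟩

theorem dist_toGHSpace_withLp_prod_le :
    dist (toGHSpace (WithLp 2 (X × Y))) (toGHSpace (WithLp 2 (X × Y'))) ≤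
      dist (toGHSpace Y) (toGHSpace Y') := by
  obtain ⟨f, g, hf, hg, ghDist_eq⟩ := ghDist_eq_hausdorffDist Y Y'
  change ghDist _ _ ≤ ghDist Y Y'
  rw [ghDist_eq]
  refine (ghDist_le_hausdorffDist (isometry_withLp_prod_map (X := X) hf)
    (isometry_withLp_prod_map hg)).trans
      (hausdorffDist_le_of_mem_dist hausdorffDist_nonneg ?_ ?_)
  · rintro _ ⟨p, rfl⟩
    obtain ⟨y', hy'⟩ := exists_mem_range_dist_le_hausdorffDist hf.continuous hg.continuous p.snd
    exact ⟨_, ⟨WithLp.toLp 2 (p.fst, y'), rfl⟩, (dist_toLp_prodMk_left _ _ _).trans_le hy'⟩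
  · rintro _ ⟨p, rfl⟩
    obtain ⟨y, hy⟩ := exists_mem_range_dist_le_hausdorffDist hg.continuous hf.continuous p.snd
    rw [hausdorffDist_comm] at hy
    exact ⟨_, ⟨WithLp.toLp 2 (p.fst, y), rfl⟩, (dist_toLp_prodMk_left _ _ _).trans_le hy⟩

theorem toGHSpace_withLp_prod_of_subsingleton [Subsingleton Y] :
    toGHSpace (WithLp 2 (X × Y)) = toGHSpace X := by
  have isometry_fst : Isometry (WithLp.fst : WithLp 2 (X × Y) → X) :=
    Isometry.of_dist_eq fun p q => (dist_withLp_prod_of_snd_eq (Subsingleton.elim _ _)).symm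
  have surjective_fst : Function.Surjective (WithLp.fst : WithLp 2 (X × Y) → X) := fun x =>
    ⟨WithLp.toLp 2 (x, Classical.arbitrary Y), rfl⟩
  exact toGHSpace_eq_toGHSpace_iff_isometryEquiv.2
    ⟨⟨Equiv.ofBijective _ ⟨isometry_fst.injective, surjective_fst⟩, isometry_fst⟩⟩

end Product

section Polydisc

variable {ι : Type*} {E : ι → Type*} [∀ i, NormedAddCommGroup (E i)]
  [∀ i, InnerProductSpace ℝ (E i)] [∀ i, FiniteDimensional ℝ (E i)]

/-- The parametrization of the polydisc with radii `|R i|` by the product of the unit balls. -/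
def polydiscMap (R : EuclideanSpace ℝ ι) : C(Π i, closedBall (0 : E i) 1, PiLp 2 E) where
  toFun u := WithLp.toLp 2 fun i => R i • (u i : E i)
  continuous_toFun := by fun_prop

variable [Fintype ι]

variable (E) in
/-- The polydisc with radii `|R i|` in the Euclidean product of the `E i`. -/
noncomputable def polydisc (R : EuclideanSpace ℝ ι) :
    TopologicalSpace.NonemptyCompacts (PiLp 2 E) :=
  compactRange (polydiscMap R)

theorem mem_polydisc {R : EuclideanSpace ℝ ι} {v : PiLp 2 E} :
    v ∈ polydisc E R ↔ ∀ i, ‖v i‖ ≤ |R i| := by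
  constructor
  · rintro ⟨u, rfl⟩ i
    have := mem_closedBall_zero_iff.1 (u i).2
    simpa [polydiscMap, norm_smul] using mul_le_of_le_one_right (abs_nonneg (R i)) this
  · intro hv
    refine ⟨fun i => ⟨(R i)⁻¹ • v i, ?_⟩, ?_⟩
    · rw [mem_closedBall_zero_iff, norm_smul, norm_inv, Real.norm_eq_abs, inv_mul_eq_div]
      exact div_le_one_of_le₀ (hv i) (abs_nonneg _)
    · ext1 i
      rcases eq_or_ne (R i) 0 with hR | hR
      · have : v i = 0 := by simpa [hR] using hv i
        simp [polydiscMap, this]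
      · simp [polydiscMap, smul_inv_smul₀ hR]

theorem isCAT0Space_polydisc (R : EuclideanSpace ℝ ι) : IsCAT0Space (polydisc E R) := by
  have : Convex ℝ (polydisc E R : Set (PiLp 2 E)) := by
    have : (polydisc E R : Set (PiLp 2 E)) =
        ⋂ i, (PiLp.projₗ (𝕜 := ℝ) 2 E i) ⁻¹' closedBall 0 |R i| := by
      ext v
      simp [mem_polydisc]
    rw [this]
    exact convex_iInter fun i => (convex_closedBall _ _).linear_preimage _
  exact isCAT0Space_of_convex this

theorem dist_polydisc_le (R R' : EuclideanSpace ℝ ι) :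
    dist (polydisc E R) (polydisc E R') ≤ dist R R' := by
  refine (dist_compactRange_le _ _).trans ((ContinuousMap.dist_le dist_nonneg).2 fun u => ?_)
  rw [← sq_le_sq₀ dist_nonneg dist_nonneg, PiLp.dist_sq_eq_of_L2, PiLp.dist_sq_eq_of_L2]
  refine Finset.sum_le_sum fun i _ => ?_
  have norm_le := mem_closedBall_zero_iff.1 (u i).2
  calc dist (R i • (u i : E i)) (R' i • (u i : E i)) ^ 2
      = (dist (R i) (R' i) * ‖(u i : E i)‖) ^ 2 := by
        rw [dist_eq_norm, ← sub_smul, norm_smul, Real.dist_eq, Real.norm_eq_abs]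
    _ ≤ dist (R i) (R' i) ^ 2 := by
        gcongr
        exact mul_le_of_le_one_right dist_nonneg norm_le

end Polydisc

section ClosePairs

/-- Every family of points of `X` indexed by `α` has two members at distance at most `ρ`. -/
def HasClosePairs (α X : Type*) [PseudoMetricSpace X] (ρ : ℝ) : Prop :=
  ∀ f : α → X, ∃ a b, a ≠ b ∧ dist (f a) (f b) ≤ ρ

theorem HasClosePairs.of_isometryEquiv {α X Y : Type*} [PseudoMetricSpace X] [PseudoMetricSpace Y]
    {ρ : ℝ} (h : HasClosePairs α X ρ) (e : X ≃ᵢ Y) : HasClosePairs α Y ρ := fun f => by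
  simpa only [Function.comp_apply, e.symm.dist_eq] using h (e.symm ∘ f)

theorem exists_hasClosePairs_fin (X : Type*) [PseudoMetricSpace X] [CompactSpace X] {ρ : ℝ}
    (hρ : 0 < ρ) : ∃ n, HasClosePairs (Fin n) X ρ := by
  obtain ⟨t, -, finite_t, cover⟩ := finite_cover_balls_of_compact (isCompact_univ (X := X))
    (half_pos hρ)
  have : Fintype t := finite_t.fintype
  have exists_center (x : X) : ∃ c : t, dist x c < ρ / 2 := by
    simpa using cover (mem_univ x)
  choose center dist_center using exists_center
  refine ⟨Fintype.card t + 1, fun f => ?_⟩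
  obtain ⟨a, b, hab, center_eq⟩ :=
    Fintype.exists_ne_map_eq_of_card_lt (center ∘ f) (by simp)
  refine ⟨a, b, hab, (dist_triangle_right _ _ (center (f a) : X)).trans ?_⟩
  have ha := dist_center (f a)
  have hb := dist_center (f b)
  rw [← Function.comp_apply (f := center), ← center_eq] at hb
  exact (add_lt_add ha hb).le.trans_eq (add_halves ρ)

variable {α ι X : Type*} [Fintype ι] [MetricSpace X] {E : ι → Type*}
  [∀ i, NormedAddCommGroup (E i)] [∀ i, InnerProductSpace ℝ (E i)]
  [∀ i, FiniteDimensional ℝ (E i)] {R : EuclideanSpace ℝ ι} {k : ι}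

theorem HasClosePairs.withLp_prod_polydisc [LinearOrder ι] [Fintype (Iio k)] {r : ι → ℝ}
    {ρ : ℝ}
    (h : HasClosePairs α (X × Π j : Iio k, closedBall (0 : E j) (r j)) ρ)
    (hR : ∀ j, |R j| ≤ r j) (hk : R k = 0) (hr : ∀ j, k < j → 2 * r j ≤ ρ) :
    HasClosePairs α (WithLp 2 (X × polydisc E R)) (√(Fintype.card ι + 1) * ρ) := by
  intro q
  have norm_le (a : α) (j : ι) : ‖(q a).snd.1 j‖ ≤ r j :=
    (mem_polydisc.1 (q a).snd.2 j).trans (hR j)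
  obtain ⟨a, b, hab, dist_le⟩ :=
    h fun a => ((q a).fst, fun j => ⟨(q a).snd.1 j, mem_closedBall_zero_iff.2 (norm_le a j)⟩)
  rw [Prod.dist_eq, sup_le_iff] at dist_le
  have ρ_nonneg : 0 ≤ ρ := dist_nonneg.trans dist_le.1
  have dist_coord_le (j : ι) : dist ((q a).snd.1 j) ((q b).snd.1 j) ≤ ρ := by
    rcases lt_trichotomy j k with hj | rfl | hj
    · exact (dist_le_pi_dist _ _ (⟨j, hj⟩ : Iio k)).trans dist_le.2
    · have eq_zero (a : α) : (q a).snd.1 j = 0 := by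
        simpa [hk] using mem_polydisc.1 (q a).snd.2 j
      rwa [eq_zero, eq_zero, dist_self]
    · exact (dist_le_norm_add_norm _ _).trans (by linarith [norm_le a j, norm_le b j, hr j hj])
  refine ⟨a, b, hab, ?_⟩
  rw [← sq_le_sq₀ dist_nonneg (by positivity), mul_pow, Real.sq_sqrt (by positivity),
    dist_sq_withLp_prod, Subtype.dist_eq, PiLp.dist_sq_eq_of_L2]
  calc dist (q a).fst (q b).fst ^ 2 + ∑ j, dist ((q a).snd.1 j) ((q b).snd.1 j) ^ 2
      ≤ ρ ^ 2 + ∑ _j : ι, ρ ^ 2 := by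
        gcongr with j
        · exact dist_le.1
        · exact dist_coord_le j
    _ = (Fintype.card ι + 1) * ρ ^ 2 := by
        rw [Finset.sum_const, Finset.card_univ, nsmul_eq_mul]
        ring

theorem not_hasClosePairs_withLp_prod_polydisc [Nonempty X] {b : α → E k} (hb : Orthonormal ℝ b)
    {s : ℝ} (hs : s < √2 * |R k|) : ¬ HasClosePairs α (WithLp 2 (X × polydisc E R)) s := by
  classical
  have mem (a : α) : PiLp.single 2 k (R k • b a) ∈ polydisc E R := mem_polydisc.2 fun i => by
    rcases eq_or_ne i k with rfl | hi
    · simp [norm_smul, hb.1 a]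
    · simp [hi]
  intro h
  obtain ⟨a, a', haa', dist_le⟩ := h fun a => WithLp.toLp 2 (Classical.arbitrary X, ⟨_, mem a⟩)
  have norm_sub : ‖b a - b a'‖ = √2 := by
    rw [← Real.sqrt_sq (norm_nonneg _), norm_sub_sq_real, hb.1, hb.1, hb.2 haa']
    norm_num
  rw [dist_toLp_prodMk_left, Subtype.dist_eq, dist_eq_norm, ← PiLp.single_sub, PiLp.norm_single,
    ← smul_sub, norm_smul, norm_sub, Real.norm_eq_abs, mul_comm] at dist_le
  exact dist_le.not_gt hs

end ClosePairs

section Thickening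

variable {ι X : Type*} [Fintype ι] [MetricSpace X] [CompactSpace X] [Nonempty X] {E : ι → Type*}
  [∀ i, NormedAddCommGroup (E i)] [∀ i, InnerProductSpace ℝ (E i)] [∀ i, FiniteDimensional ℝ (E i)]

variable (X E) in
/-- The isometry class of the Euclidean product of `X` and the polydisc with radii `|R i|`: a
thickening of `X`, which is CAT(0) if `X` is. -/
noncomputable def polydiscThickening (R : EuclideanSpace ℝ ι) : GHSpace :=
  toGHSpace (WithLp 2 (X × polydisc E R))

theorem polydiscThickening_mem_GHCat0 (hX : IsCAT0Space X) (R : EuclideanSpace ℝ ι) :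
    polydiscThickening X E R ∈ GHCat0 :=
  toGHSpace_mem_GHCat0 (hX.prod (isCAT0Space_polydisc R))

theorem dist_polydiscThickening_le (R R' : EuclideanSpace ℝ ι) :
    dist (polydiscThickening X E R) (polydiscThickening X E R') ≤ dist R R' :=
  dist_toGHSpace_withLp_prod_le.trans <|
    (ghDist_le_nonemptyCompacts_dist _ _).trans (dist_polydisc_le R R')

theorem continuous_polydiscThickening : Continuous (polydiscThickening X E) :=
  (LipschitzWith.of_dist_le_mul (K := 1) fun R R' => by
    simpa using dist_polydiscThickening_le R R').continuous

theorem polydiscThickening_zero : polydiscThickening X E 0 = toGHSpace X := by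
  have : Subsingleton (polydisc E 0) := subsingleton_compactRange fun u u' => by
    simp [polydiscMap]
  exact toGHSpace_withLp_prod_of_subsingleton

theorem dist_polydiscThickening_toGHSpace_le (R : EuclideanSpace ℝ ι) :
    dist (polydiscThickening X E R) (toGHSpace X) ≤ ‖R‖ := by
  rw [← polydiscThickening_zero (E := E), ← dist_zero_right]
  exact dist_polydiscThickening_le R 0

theorem polydiscThickening_ne [LinearOrder ι] {α : Type*} {k : ι} [Fintype (Iio k)] {b : α → E k}
    (hb : Orthonormal ℝ b) {R R' : EuclideanSpace ℝ ι} {r : ι → ℝ} {ρ : ℝ}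
    (h : HasClosePairs α (X × Π j : Iio k, closedBall (0 : E j) (r j)) ρ)
    (hR : ∀ j, |R j| ≤ r j) (hk : R k = 0) (hr : ∀ j, k < j → 2 * r j ≤ ρ)
    (hρ : √(Fintype.card ι + 1) * ρ < √2 * |R' k|) :
    polydiscThickening X E R ≠ polydiscThickening X E R' := fun heq =>
  let ⟨e⟩ := toGHSpace_eq_toGHSpace_iff_isometryEquiv.1 heq
  not_hasClosePairs_withLp_prod_polydisc hb hρ
    ((h.withLp_prod_polydisc hR hk hr).of_isometryEquiv e)

end Thickening

theorem exists_forall_of_forall_Iio {ι α : Type*} [Preorder ι] [WellFoundedLT ι]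
    {P : ∀ k : ι, (Iio k → α) → α → Prop} (h : ∀ k f, ∃ a, P k f a) :
    ∃ f : ι → α, ∀ k, P k (fun j => f j) (f k) := by
  choose next hnext using h
  let f : ι → α := wellFounded_lt.fix fun k f => next k fun j => f j j.2
  refine ⟨f, fun k => ?_⟩
  have f_eq : f k = next k fun j => f j := wellFounded_lt.fix_eq _ k
  rw [f_eq]
  exact hnext k _

theorem exists_fin_rapidly_decreasing (n : ℕ) {ε η : ℝ} (hε : 0 < ε) (hη : 0 < η) :
    ∃ r : EuclideanSpace ℝ (Fin n), (∀ i, 0 < r i) ∧ ‖r‖ < ε ∧ ∀ k j, k < j → r j ≤ η * r k := by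
  let θ := min η 1
  have θ_pos : 0 < θ := lt_min hη one_pos
  let v : EuclideanSpace ℝ (Fin n) := WithLp.toLp 2 fun i => θ ^ (i : ℕ)
  have v_decreasing (k j : Fin n) (hkj : k < j) : v j ≤ η * v k :=
    calc θ ^ (j : ℕ) ≤ θ ^ (k + 1 : ℕ) := pow_le_pow_of_le_one θ_pos.le (min_le_right _ _) hkj
      _ = θ * θ ^ (k : ℕ) := pow_succ' _ _
      _ ≤ η * θ ^ (k : ℕ) := by gcongr; exact min_le_left _ _
  let δ := ε / (‖v‖ + 1)
  have δ_pos : 0 < δ := by positivity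
  refine ⟨δ • v, fun i => mul_pos δ_pos (pow_pos θ_pos _), ?_, fun k j hkj => ?_⟩
  · rw [norm_smul, Real.norm_of_nonneg δ_pos.le, div_mul_eq_mul_div, div_lt_iff₀ (by positivity)]
    linarith
  · calc δ * v j ≤ δ * (η * v k) := by gcongr; exact v_decreasing k j hkj
      _ = η * (δ * v k) := mul_left_comm _ _ _

theorem exists_continuous_cube_GHCat0 {X : Type*} [MetricSpace X] [CompactSpace X] [Nonempty X]
    (hX : IsCAT0Space X) (n : ℕ) {ε : ℝ} (hε : 0 < ε) :
    ∃ φ : (Fin n → I) → GHSpace, Continuous φ ∧ (∀ x, φ x ∈ GHCat0) ∧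
      (∀ x, dist (φ x) (toGHSpace X) < ε) ∧
      ∀ k x y, x k = 0 → y k = 1 → φ x ≠ φ y := by
  obtain ⟨r, r_pos, norm_r, r_decreasing⟩ :=
    exists_fin_rapidly_decreasing n hε (η := 1 / (2 * (n + 1))) (by positivity)
  let ρ (k : Fin n) : ℝ := r k / (n + 1)
  have ρ_pos (k : Fin n) : 0 < ρ k := div_pos (r_pos k) (by positivity)
  obtain ⟨d, hd⟩ := exists_forall_of_forall_Iio fun (k : Fin n) (d : Iio k → ℕ) =>
    exists_hasClosePairs_fin (X × Π j, closedBall (0 : EuclideanSpace ℝ (Fin (d j))) (r j))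
      (ρ_pos k)
  let R (x : Fin n → I) : EuclideanSpace ℝ (Fin n) := WithLp.toLp 2 fun i => x i * r i
  have R_le (x : Fin n → I) (i : Fin n) : |R x i| ≤ r i := by
    rw [abs_of_nonneg (mul_nonneg (x i).2.1 (r_pos i).le)]
    exact mul_le_of_le_one_left (r_pos i).le (x i).2.2
  refine ⟨fun x => polydiscThickening X (fun i => EuclideanSpace ℝ (Fin (d i))) (R x),
    continuous_polydiscThickening.comp (by fun_prop),
    fun x => polydiscThickening_mem_GHCat0 hX _,
    fun x => (dist_polydiscThickening_toGHSpace_le _).trans_lt (lt_of_le_of_lt ?_ norm_r),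
    fun k x y hx hy => polydiscThickening_ne (EuclideanSpace.basisFun _ ℝ).orthonormal (hd k)
      (R_le x) ?_ (fun j hj => ?_) ?_⟩
  · rw [EuclideanSpace.norm_eq, EuclideanSpace.norm_eq]
    gcongr with i
    exact (R_le x i).trans (le_abs_self _)
  · simp [R, hx]
  · calc 2 * r j ≤ 2 * (1 / (2 * (n + 1)) * r k) := by gcongr; exact r_decreasing k j hj
      _ = ρ k := by simp only [ρ]; field_simp
  · rw [Fintype.card_fin]
    calc √(n + 1) * ρ k ≤ (n + 1) * ρ k := by
          gcongr
          · exact (ρ_pos k).le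
          · exact Real.sqrt_le_self_iff.2 (.inr (by simp))
      _ = r k := by simp only [ρ]; field_simp
      _ < √2 * r k := lt_mul_of_one_lt_left (r_pos k) Real.one_lt_sqrt_two
      _ = √2 * |R y k| := by simp [R, hy, abs_of_pos (r_pos k)]

/-- The set `𝒵` of all compact CAT(0) metric spaces is
path-connected as a subspace of the Gromov–Hausdorff space, and every nonempty
open subset of `𝒵` has infinite covering dimension. -/
theorem statement7 :
    PathConnectedSpace ↥GHCat0 ∧
    ∀ U : Set ↥GHCat0, IsOpen U → U.Nonempty →
      ¬ ∃ n : ℕ, CovDimLE ↥U n := by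
  refine ⟨pathConnectedSpace_GHCat0, ?_⟩
  rintro U hU ⟨p, hp⟩ ⟨n, hn⟩
  obtain ⟨ε, hε, ball_subset⟩ := Metric.isOpen_iff.1 hU p hp
  obtain ⟨φ, hφ, φ_mem, dist_φ, φ_separated⟩ := exists_continuous_cube_GHCat0 p.2 (n + 1) hε
  rw [p.1.toGHSpace_rep] at dist_φ
  let ψ (x : Fin (n + 1) → I) : U := ⟨⟨φ x, φ_mem x⟩, ball_subset (dist_φ x)⟩
  have hψ : Continuous ψ := (hφ.subtype_mk φ_mem).subtype_mk _
  have ψ_separated (k x y) (hx : x k = 0) (hy : y k = 1) : ψ x ≠ ψ y := fun heq =>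
    φ_separated k x y hx hy (congrArg (fun q : U => q.1.1) heq)
  exact not_covDimLE_of_separated_faces hψ ψ_separated (by simp) hn
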